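/- arXiv:2512.23668 — 2 statements merged into one kernel-verified Lean document; each statement's English description precedes it below -/
import Mathlib

section
/- For every prime p and positive integer c, the truncated sum congruence Σ_{0<n_1<···<n_c<p} 1/(n_1^3 n_2^2···n_{c-1}^2 n_c^3) + 2 Σ_{0<n_1<···<n_{c}<p} 1/(n_1^3 n_2^3 n_3^2···n_{c}^2) ≡ 0 (mod p) holds (for c=1 read the first sum as Σ 1/n_1^5 with appropriate interpretation: both sums are ζ_p(3,{2}^{c−1},3) and ζ_p(3,3,{2}^{c−1})); i.e. ζ_p(3,{2}^{c−1},3) + 2ζ_p(3,3,{2}^{c−1}) ≡ 0 (mod p). -/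
/-- The truncated multiple zeta value
`ζ_p(k₁,…,k_r) = ∑_{0<n₁<⋯<n_r<p} 1/(n₁^{k₁}⋯n_r^{k_r})`, with inverses computed
in `ℤ/pℤ`. -/
noncomputable def zetaP (p : ℕ) (ks : List ℕ) : ZMod p :=
  ∑ n : Fin ks.length → Fin p,
    if (∀ i j : Fin ks.length, i < j → (n i : ℕ) < (n j : ℕ)) ∧ (∀ i, 0 < (n i : ℕ)) then
      ∏ i, (((n i : ℕ) : ZMod p) ^ ks.get i)⁻¹
    else 0


open Finset in
theorem hoff_core {R : Type*} [CommRing R] (q : ℕ) (y : R) (a G K C : ℕ → R)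
    (ha : ∀ i < q, ((i : R) + 1) * a i = 1)
    (hq : (q : R) + 1 = 0)
    (hG0 : G 0 = 1) (hG : ∀ i, G (i + 1) = G i * (1 + y * a i ^ 2))
    (hK : ∀ i, G i * K i = 1) (hGq : G q = 1)
    (hC0 : C 0 = 0) (hC : ∀ i, C (i + 1) = C i + a i ^ 3)
    (hCq : C q = 0) (h2 : ∑ i ∈ range q, a i ^ 2 = 0)
    (h4 : ∑ i ∈ range q, a i ^ 4 = 0) (h6 : ∑ i ∈ range q, a i ^ 6 = 0)
    (hGK : ∀ i ≤ q, G (q - i) = K i) (hCr : ∀ i ≤ q, C (q - i) = C i) :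
    y ^ 3 * (∑ j ∈ range q, ∑ i ∈ range j, a i ^ 3 * a j ^ 3 * G j * K (i + 1)
      + 2 * ∑ j ∈ range q, a j ^ 3 * K (j + 1) * C j) = 0 := by
  have hK0 : K 0 = 1 := by have := hK 0; rwa [hG0, one_mul] at this
  have hKq : K q = 1 := by have := hK q; rwa [hGq, one_mul] at this
  have hKs : ∀ i, K i = K (i + 1) * (1 + y * a i ^ 2) := by
    intro i
    have h1 := hK i
    have h2 := hK (i + 1)
    rw [hG] at h2
    calc K i = K i * (G i * (1 + y * a i ^ 2) * K (i + 1)) := by rw [h2, mul_one]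
      _ = (G i * K i) * (K (i + 1) * (1 + y * a i ^ 2)) := by ring
      _ = _ := by rw [h1, one_mul]
  have har : ∀ i < q, a (q - 1 - i) = - a i := by
    intro i hi
    have h1 := ha i hi
    have h2 := ha (q - 1 - i) (by omega)
    have h3 : ((q - 1 - i : ℕ) : R) + 1 = -((i : R) + 1) := by
      have : ((q - 1 - i : ℕ) : R) + ((i : R) + 1) = q := by
        exact_mod_cast congrArg (Nat.cast (R := R)) (show q - 1 - i + (i + 1) = q by omega)
      linear_combination this + hq
    rw [h3] at h2
    calc a (q - 1 - i) = a (q - 1 - i) * (((i : R) + 1) * a i) := by rw [h1, mul_one]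
      _ = -((-((i : R) + 1)) * a (q - 1 - i)) * a i := by ring
      _ = _ := by rw [h2]; ring
  set X : ℕ → ℕ → R := fun i j => G j * K i * (C j - C i) with hX
  -- the telescoping identity
  have hE : ∀ r, ∑ j ∈ range r, ∑ i ∈ range j, a (j - i - 1) * (X (i + 1) (j + 1) - X i j)
      = ∑ d ∈ range r, a d * (X (r - 1 - d) r - X 0 (d + 1)) := by
    intro r
    induction r with
    | zero => simp
    | succ r ih =>
      rw [sum_range_succ, ih, sum_range_succ]
      have : ∑ i ∈ range r, a (r - i - 1) * (X (i + 1) (r + 1) - X i r)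
        = ∑ d ∈ range r, a d * (X (r - d) (r + 1) - X (r - 1 - d) r) := by
        rw [← sum_range_reflect]
        apply sum_congr rfl
        intro d hd
        have hd := mem_range.1 hd
        rw [show r - (r - 1 - d) - 1 = d by omega, show r - 1 - d + 1 = r - d by omega]
      rw [this, ← sum_add_distrib]
      simp only [Nat.add_sub_cancel, Nat.sub_self, sub_self, mul_zero, add_zero]
      apply sum_congr rfl
      intro d _
      ring
  have hF : ∀ r, ∑ j ∈ range r, ∑ i ∈ range j, a j * (X (i + 1) (j + 1) - X i (j + 1))
      = ∑ j ∈ range r, a j * (X j (j + 1) - X 0 (j + 1)) := by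
    intro r
    apply sum_congr rfl
    intro j _
    rw [← mul_sum, sum_range_sub (fun i => X i (j + 1))]
  have hpair : ∀ j < q, ∀ i < j,
      G j * K (i + 1) * (a i ^ 2 * a j ^ 2) + G j * K (i + 1) * (a i * a j ^ 3)
       + y * (G j * K (i + 1) * (a i * a j ^ 2) * (C (j + 1) - C i))
       - y ^ 2 * (G j * K (i + 1) * (a i ^ 2 * a j ^ 3) * (C (j + 1) - C i))
      = - (a (j - i - 1) * (X (i + 1) (j + 1) - X i j))
        + a j * (X (i + 1) (j + 1) - X i (j + 1)) := by
    intro j hj i hi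
    have h1 := ha i (by omega)
    have h2 := ha j hj
    have h3 := ha (j - i - 1) (by omega)
    have h4 : ((j - i - 1 : ℕ) : R) + 1 = (j : R) - i := by
      have : ((j - i - 1 : ℕ) : R) + 1 + i = j := by
        exact_mod_cast congrArg (Nat.cast (R := R)) (show j - i - 1 + 1 + i = j by omega)
      linear_combination this
    rw [h4] at h3
    -- e * (a i - a j) = a i * a j
    have h5 : a (j - i - 1) * (a i - a j) = a i * a j := by
      linear_combination (a i * a j) * h3 + (a (j - i - 1) * a j) * h1 - (a (j-i-1) * a i) * h2
    simp only [hX]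
    rw [hKs i, hG j, hC j, hC i]
    generalize a (j - i - 1) = e at *
    generalize a i = u at *
    generalize a j = v at *
    generalize G j = g at *
    generalize K (i+1) = k at *
    generalize C i = c at *
    generalize C j = d at *
    linear_combination (-(g * k * (y * (u + v) * (d - c) + (1 + y * v ^ 2) * (u ^ 2 + u * v + v ^ 2)))) * h5
  -- sums
  have hsum : (∑ j ∈ range q, ∑ i ∈ range j, G j * K (i + 1) * (a i ^ 2 * a j ^ 2))
      + (∑ j ∈ range q, ∑ i ∈ range j, G j * K (i + 1) * (a i * a j ^ 3))
      + y * (∑ j ∈ range q, ∑ i ∈ range j, G j * K (i + 1) * (a i * a j ^ 2) * (C (j + 1) - C i))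
      - y ^ 2 * (∑ j ∈ range q, ∑ i ∈ range j,
          G j * K (i + 1) * (a i ^ 2 * a j ^ 3) * (C (j + 1) - C i))
      = - (∑ d ∈ range q, a d * (X (q - 1 - d) q - X 0 (d + 1)))
        + ∑ j ∈ range q, a j * (X j (j + 1) - X 0 (j + 1)) := by
    rw [← hE, ← hF]
    simp only [mul_sum, ← sum_add_distrib, ← sum_sub_distrib, ← sum_neg_distrib]
    apply sum_congr rfl
    intro j hj
    apply sum_congr rfl
    intro i hi
    exact hpair j (mem_range.1 hj) i (mem_range.1 hi)
  have hR : - (∑ d ∈ range q, a d * (X (q - 1 - d) q - X 0 (d + 1)))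
        + ∑ j ∈ range q, a j * (X j (j + 1) - X 0 (j + 1))
      = - ∑ i ∈ range q, a i * C i * K i := by
    have e1 : ∑ d ∈ range q, a d * X (q - 1 - d) q = ∑ i ∈ range q, a i * C i * K i := by
      rw [← sum_range_reflect]
      apply sum_congr rfl
      intro d hd
      have hd := mem_range.1 hd
      rw [show q - 1 - (q - 1 - d) = d by omega, har d hd]
      simp only [hX]
      rw [hGq, hCq]; ring
    have e2 : ∑ j ∈ range q, a j * X j (j + 1) = 0 := by
      calc _ = ∑ j ∈ range q, (a j ^ 4 + y * a j ^ 6) := by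
            apply sum_congr rfl
            intro j _
            simp only [hX]
            rw [hG, hC]
            linear_combination (a j ^ 4 * (1 + y * a j ^ 2)) * hK j
        _ = 0 := by rw [sum_add_distrib, ← mul_sum, h4, h6]; ring
    simp only [mul_sub, sum_sub_distrib]
    rw [e1, e2]; ring
  -- T1a
  have hA : y ^ 2 * (∑ j ∈ range q, ∑ i ∈ range j, G j * K (i + 1) * (a i ^ 2 * a j ^ 2)) = 0 := by
    have e1 : ∀ r, y * (∑ j ∈ range r, ∑ i ∈ range j, G j * K (i + 1) * (a i ^ 2 * a j ^ 2))
        = ∑ i ∈ range r, K (i + 1) * a i ^ 2 * (G r - G (i + 1)) := by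
      intro r
      induction r with
      | zero => simp
      | succ r ih =>
        rw [sum_range_succ, mul_add, ih, sum_range_succ, sub_self, mul_zero, add_zero, mul_sum,
          ← sum_add_distrib]
        apply sum_congr rfl
        intro i _
        rw [hG r]; ring
    have e2 : y * ∑ i ∈ range q, K (i + 1) * a i ^ 2 = 0 := by
      have : y * ∑ i ∈ range q, K (i + 1) * a i ^ 2 = ∑ i ∈ range q, (K i - K (i + 1)) := by
        rw [mul_sum]
        apply sum_congr rfl
        intro i _
        rw [hKs i]; ring
      rw [this, sum_range_sub', hK0, hKq, sub_self]
    have e3 : ∑ i ∈ range q, K (i + 1) * a i ^ 2 * (G q - G (i + 1))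
        = ∑ i ∈ range q, K (i + 1) * a i ^ 2 := by
      have : ∑ i ∈ range q, K (i + 1) * a i ^ 2 * (G q - G (i + 1))
          = ∑ i ∈ range q, K (i + 1) * a i ^ 2 - ∑ i ∈ range q, a i ^ 2 := by
        rw [← sum_sub_distrib]
        apply sum_congr rfl
        intro i _
        rw [hGq]
        linear_combination (-a i ^ 2) * hK (i + 1)
      rw [this, h2, sub_zero]
    rw [pow_two, mul_assoc, e1, e3, e2]
  have hB : y * (∑ j ∈ range q, ∑ i ∈ range j, G j * K (i + 1) * (a i * a j ^ 2) * (C (j + 1) - C i))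
      = - (∑ i ∈ range q, a i * K (i + 1) * C i)
        - ∑ j ∈ range q, ∑ i ∈ range j, G j * K (i + 1) * (a i * a j ^ 3) := by
    have e1 : ∀ r, y * (∑ j ∈ range r, ∑ i ∈ range j,
          G j * K (i + 1) * (a i * a j ^ 2) * (C (j + 1) - C i))
        = ∑ i ∈ range r, a i * K (i + 1) * (G r * (C r - C i) - G (i + 1) * a i ^ 3)
          - ∑ j ∈ range r, ∑ i ∈ range j, G j * K (i + 1) * (a i * a j ^ 3) := by
      intro r
      induction r with
      | zero => simp
      | succ r ih =>
        rw [sum_range_succ, mul_add, ih, sum_range_succ (fun i => a i * K (i + 1) * _),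
          sum_range_succ (fun j => ∑ i ∈ range j, G j * K (i + 1) * (a i * a j ^ 3))]
        have e0 : a r * K (r + 1) * (G (r + 1) * (C (r + 1) - C r) - G (r + 1) * a r ^ 3) = 0 := by
          rw [hC r]; ring
        rw [e0, add_zero]
        have : y * (∑ i ∈ range r, G r * K (i + 1) * (a i * a r ^ 2) * (C (r + 1) - C i))
          = ∑ i ∈ range r, a i * K (i + 1) * (G (r + 1) * (C (r + 1) - C i) - G (i + 1) * a i ^ 3)
            - ∑ i ∈ range r, a i * K (i + 1) * (G r * (C r - C i) - G (i + 1) * a i ^ 3)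
            - ∑ i ∈ range r, G r * K (i + 1) * (a i * a r ^ 3) := by
          rw [mul_sum, ← sum_sub_distrib, ← sum_sub_distrib]
          apply sum_congr rfl
          intro i _
          rw [hG r, hC r]; ring
        rw [this]; ring
    rw [e1]
    have : ∑ i ∈ range q, a i * K (i + 1) * (G q * (C q - C i) - G (i + 1) * a i ^ 3)
      = - (∑ i ∈ range q, a i * K (i + 1) * C i) - ∑ i ∈ range q, a i ^ 4 := by
      rw [← sum_neg_distrib, ← sum_sub_distrib]
      apply sum_congr rfl
      intro i _
      rw [hGq, hCq]
      linear_combination (-a i ^ 4) * hK (i + 1)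
    rw [this, h4]; ring
  have hD : y ^ 2 * (∑ j ∈ range q, ∑ i ∈ range j,
          G j * K (i + 1) * (a i ^ 2 * a j ^ 3) * (C (j + 1) - C i))
      = - y * (∑ j ∈ range q, ∑ i ∈ range j, a i ^ 3 * a j ^ 3 * G j * K (i + 1)
        + ∑ j ∈ range q, a j ^ 3 * K (j + 1) * C j) := by
    have e1 : ∀ (c : R) r, y * ∑ i ∈ range r, a i ^ 2 * K (i + 1) * (c - C i)
        = c - K r * (c - C r) - ∑ i ∈ range r, K (i + 1) * a i ^ 3 := by
      intro c r
      induction r with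
      | zero => simp [hK0, hC0]
      | succ r ih =>
        rw [sum_range_succ, mul_add, ih, sum_range_succ, hKs r, hC r]; ring
    have e2 : ∑ j ∈ range q, a j ^ 3 * G j * C (j + 1)
        = - ∑ j ∈ range q, a j ^ 3 * K (j + 1) * C j := by
      rw [← sum_range_reflect, ← sum_neg_distrib]
      apply sum_congr rfl
      intro j hj
      have hj := mem_range.1 hj
      rw [har j hj, show q - 1 - j = q - (j + 1) by omega, hGK _ (by omega),
        show q - (j + 1) + 1 = q - j by omega, hCr _ (by omega)]
      ring
    have e3 : ∀ j, y * ∑ i ∈ range j, G j * K (i + 1) * (a i ^ 2 * a j ^ 3) * (C (j + 1) - C i)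
        = a j ^ 3 * G j * C (j + 1) - a j ^ 6
          - ∑ i ∈ range j, a i ^ 3 * a j ^ 3 * G j * K (i + 1) := by
      intro j
      have t1 : ∑ i ∈ range j, G j * K (i + 1) * (a i ^ 2 * a j ^ 3) * (C (j + 1) - C i)
          = G j * a j ^ 3 * ∑ i ∈ range j, a i ^ 2 * K (i + 1) * (C (j + 1) - C i) := by
        rw [mul_sum]; exact sum_congr rfl fun i _ => by ring
      have t2 : ∑ i ∈ range j, a i ^ 3 * a j ^ 3 * G j * K (i + 1)
          = G j * a j ^ 3 * ∑ i ∈ range j, K (i + 1) * a i ^ 3 := by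
        rw [mul_sum]; exact sum_congr rfl fun i _ => by ring
      rw [t1, t2]
      have t3 := e1 (C (j + 1)) j
      have t4 := hC j
      linear_combination (G j * a j ^ 3) * t3 - (G j * K j * a j ^ 3) * t4 - a j ^ 6 * hK j
    rw [pow_two, mul_assoc, mul_sum]
    rw [sum_congr rfl (fun j _ => e3 j)]
    simp only [sum_sub_distrib]
    rw [e2, h6]; ring
  have hM : ∑ i ∈ range q, a i * C i * K i - ∑ i ∈ range q, a i * K (i + 1) * C i
      = y * ∑ j ∈ range q, a j ^ 3 * K (j + 1) * C j := by
    rw [← sum_sub_distrib, mul_sum]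
    apply sum_congr rfl
    intro i _
    rw [hKs i]; ring
  rw [hR, hB, hD] at hsum
  linear_combination y ^ 2 * hsum - hA - y ^ 2 * hM
/-- Nested sums. -/
noncomputable def hoffZ {F : Type*} [CommRing F] (q : ℕ) (a : ℕ → F) : List ℕ → ℕ → F
  | [], _ => 1
  | k :: ks, lo => ∑ n ∈ Finset.Ico lo q, a n ^ k * hoffZ q a ks (n + 1)

theorem hoff_zeta_aux (p : ℕ) [Fact p.Prime] (ks : List ℕ) : ∀ lo : ℕ,
    (∑ n : Fin ks.length → Fin p,
    if (∀ i j : Fin ks.length, i < j → (n i : ℕ) < (n j : ℕ)) ∧ (∀ i, lo < (n i : ℕ)) then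
      ∏ i, (((n i : ℕ) : ZMod p) ^ ks.get i)⁻¹
    else 0) = hoffZ (p - 1) (fun i => (((i + 1 : ℕ) : ZMod p))⁻¹) ks lo := by
  induction ks with
  | nil => intro lo; simp [hoffZ]
  | cons k ks ih =>
    intro lo
    have hp : 0 < p := (Fact.out : p.Prime).pos
    refine ((Fin.consEquiv (fun _ : Fin (ks.length + 1) => Fin p)).sum_comp _).symm.trans ?_
    rw [Fintype.sum_prod_type]
    have h1 : ∀ m : Fin p, (∑ n : Fin ks.length → Fin p,
        if (∀ i j : Fin (ks.length + 1), i < j → ((Fin.consEquiv (fun _ : Fin (ks.length + 1) => Fin p) (m, n) i : Fin p) : ℕ) < ((Fin.consEquiv (fun _ : Fin (ks.length + 1) => Fin p) (m, n) j : Fin p) : ℕ)) ∧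
          (∀ i : Fin (ks.length + 1), lo < ((Fin.consEquiv (fun _ : Fin (ks.length + 1) => Fin p) (m, n) i : Fin p) : ℕ)) then
        ∏ i : Fin (ks.length + 1), ((((Fin.consEquiv (fun _ : Fin (ks.length + 1) => Fin p) (m, n) i : Fin p) : ℕ) : ZMod p) ^ (k :: ks).get i)⁻¹
        else 0) = if lo < (m : ℕ) then (((m : ℕ) : ZMod p))⁻¹ ^ k *
          hoffZ (p - 1) (fun i => (((i + 1 : ℕ) : ZMod p))⁻¹) ks m else 0 := by
      intro m
      rw [← ih]
      split_ifs with hm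
      · rw [Finset.mul_sum]
        apply Finset.sum_congr rfl
        intro n _
        rw [mul_ite, mul_zero]
        refine if_congr ?_ ?_ rfl
        · simp only [Fin.forall_fin_succ, Fin.consEquiv_apply, Fin.cons_zero, Fin.cons_succ,
            Fin.succ_lt_succ_iff, Fin.succ_pos, lt_irrefl, false_imp_iff, true_imp_iff, true_and,
            Fin.not_lt_zero]
          constructor
          · rintro ⟨⟨h1, h2⟩, h3⟩
            exact ⟨fun i j => h2 i j, h1⟩
          · rintro ⟨h1, h2⟩
            exact ⟨⟨h2, fun i j => h1 i j⟩, hm, fun i => hm.trans (h2 i)⟩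
        · rw [Fin.prod_univ_succ]
          simp [Fin.consEquiv_apply]
      · apply Finset.sum_eq_zero
        intro n _
        rw [if_neg]
        rintro ⟨_, h⟩
        exact hm (by simpa using h 0)
    refine (Finset.sum_congr rfl (fun m _ => h1 m)).trans ?_
    rw [Fin.sum_univ_eq_sum_range (fun m : ℕ => if lo < m then ((m : ZMod p))⁻¹ ^ k *
          hoffZ (p - 1) (fun i => (((i + 1 : ℕ) : ZMod p))⁻¹) ks m else 0) p, ← Finset.sum_filter]
    have h2 : (Finset.range p).filter (fun m => lo < m) = Finset.Ico (lo + 1) ((p - 1) + 1) := by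
      ext m; simp; omega
    rw [h2, ← Finset.sum_Ico_add' , hoffZ]

theorem hoff_zeta (p : ℕ) [Fact p.Prime] (ks : List ℕ) :
    zetaP p ks = hoffZ (p - 1) (fun i => (((i + 1 : ℕ) : ZMod p))⁻¹) ks 0 :=
  hoff_zeta_aux p ks 0

section
open PowerSeries
variable {F : Type*} [Field F]

theorem hoffZ_succ (q : ℕ) (a : ℕ → F) (k : ℕ) (ks : List ℕ) (lo : ℕ) (h : lo < q) :
    hoffZ q a (k :: ks) lo = a lo ^ k * hoffZ q a ks (lo + 1) + hoffZ q a (k :: ks) (lo + 1) := by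
  simp only [hoffZ]
  rw [Finset.sum_eq_sum_Ico_succ_bot h]

/-- Generating function. -/
noncomputable def hoffA (q : ℕ) (a : ℕ → F) (ks : List ℕ) (lo : ℕ) : PowerSeries F :=
  PowerSeries.mk (fun b => hoffZ q a (List.replicate b 2 ++ ks) lo)

theorem hoffA_end (q : ℕ) (a : ℕ → F) (ks : List ℕ) :
    hoffA q a ks q = PowerSeries.C (hoffZ q a ks q) := by
  ext b
  cases b with
  | zero => simp [hoffA]
  | succ b => simp [hoffA, List.replicate_succ, hoffZ]

theorem hoffA_step (q : ℕ) (a : ℕ → F) (ks : List ℕ) (lo : ℕ) (h : lo < q) :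
    hoffA q a ks lo = hoffA q a ks (lo + 1) * (1 + X * C (a lo) ^ 2)
      + C (hoffZ q a ks lo - hoffZ q a ks (lo + 1)) := by
  ext b
  have : hoffA q a ks (lo + 1) * (1 + X * C (a lo) ^ 2)
    = hoffA q a ks (lo + 1) + hoffA q a ks (lo + 1) * C (a lo ^ 2) * X := by
    rw [map_pow]; ring
  rw [this]
  cases b with
  | zero => simp [hoffA]
  | succ b =>
    simp only [map_add, coeff_succ_mul_X, coeff_mul_C, coeff_C]
    simp [hoffA, List.replicate_succ, hoffZ_succ _ _ _ _ _ h]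
    ring

theorem hoffA_nil (q : ℕ) (a : ℕ → F) (G : ℕ → PowerSeries F)
    (hG : ∀ i, G (i + 1) = G i * (1 + X * C (a i) ^ 2)) (lo : ℕ) (h : lo ≤ q) :
    G lo * hoffA q a [] lo = G q := by
  induction h using Nat.decreasingInduction with
  | self => rw [hoffA_end]; simp [hoffZ]
  | of_succ k hk ih =>
    rw [← ih, hoffA_step _ _ _ _ hk, hG]
    simp [hoffZ]; ring

theorem hoffA_three (q : ℕ) (a : ℕ → F) (G : ℕ → PowerSeries F)
    (hG : ∀ i, G (i + 1) = G i * (1 + X * C (a i) ^ 2)) (lo : ℕ) (h : lo ≤ q) :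
    G lo * hoffA q a [3] lo = ∑ n ∈ Finset.Ico lo q, C (a n) ^ 3 * G n := by
  induction h using Nat.decreasingInduction with
  | self => rw [hoffA_end]; simp [hoffZ]
  | of_succ k hk ih =>
    rw [Finset.sum_eq_sum_Ico_succ_bot hk, ← ih, hoffA_step _ _ _ _ hk, hG,
      hoffZ_succ _ _ _ _ _ hk]
    simp [hoffZ]; ring

theorem hoffS1 (q : ℕ) (a : ℕ → F) (b : ℕ) :
    hoffZ q a ([3] ++ List.replicate b 2 ++ [3]) 0
      = coeff b (∑ i ∈ Finset.Ico 0 q, C (a i) ^ 3 * hoffA q a [3] (i + 1)) := by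
  simp only [List.cons_append, List.nil_append, hoffZ, map_sum, ← map_pow, coeff_C_mul]
  simp [hoffA]

theorem hoffS3 (q : ℕ) (a : ℕ → F) (b : ℕ) :
    hoffZ q a ([3, 3] ++ List.replicate b 2) 0
      = coeff b (∑ i ∈ Finset.Ico 0 q, ∑ j ∈ Finset.Ico (i + 1) q,
          C (a i) ^ 3 * (C (a j) ^ 3 * hoffA q a [] (j + 1))) := by
  simp only [List.cons_append, List.nil_append, hoffZ, map_sum, ← map_pow, coeff_C_mul]
  simp [hoffA, Finset.mul_sum]
end

section
open PowerSeries
theorem hoff_prod (p : ℕ) [Fact p.Prime] {M : Type*} [CommMonoid M] (f : ZMod p → M) :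
    ∏ i ∈ Finset.range (p - 1), f ((i + 1 : ℕ) : ZMod p)
      = ∏ x ∈ Finset.univ.erase (0 : ZMod p), f x := by
  have hp : 1 < p := (Fact.out : p.Prime).one_lt
  have hv : ∀ i < p - 1, ((i + 1 : ℕ) : ZMod p).val = i + 1 := fun i hi =>
    ZMod.val_cast_of_lt (by omega)
  refine Finset.prod_nbij' (fun i => ((i + 1 : ℕ) : ZMod p)) (fun x => x.val - 1) ?_ ?_ ?_ ?_ ?_
  · intro i hi
    have hi := Finset.mem_range.1 hi
    simp only [Finset.mem_erase, Finset.mem_univ, and_true]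
    intro h
    have := hv i hi
    rw [h, ZMod.val_zero] at this
    omega
  · intro x hx
    have := ZMod.val_lt x
    simp only [Finset.mem_range]
    omega
  · intro i hi
    simp only [hv i (Finset.mem_range.1 hi)]
    omega
  · intro x hx
    simp only [Finset.mem_erase, Finset.mem_univ, and_true] at hx
    have h1 : 0 < x.val := Nat.pos_of_ne_zero (by rwa [Ne, ZMod.val_eq_zero])
    rw [show x.val - 1 + 1 = x.val by omega, ZMod.natCast_zmod_val]
  · intro i hi; rfl

theorem hoff_scale {F : Type*} [Field F] [Fintype F] [DecidableEq F] {M : Type*} [CommMonoid M] (f : F → M) (r : F)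
    (hr : r ≠ 0) :
    ∏ x ∈ Finset.univ.erase (0 : F), f (r * x) = ∏ x ∈ Finset.univ.erase (0 : F), f x := by
  refine Finset.prod_nbij' (fun x => r * x) (fun x => r⁻¹ * x) ?_ ?_ ?_ ?_ ?_
  · intro x hx; simp_all
  · intro x hx; simp_all
  · intro x hx; simp [hr]
  · intro x hx; simp [hr]
  · intro x hx; rfl

theorem hoff_root (p : ℕ) [Fact p.Prime] : ∃ r : ZMod p, r ≠ 0 ∧
    ∀ j, 0 < j → j < p - 1 → r ^ j ≠ 1 := by
  obtain ⟨u, hu⟩ := IsCyclic.exists_generator (α := (ZMod p)ˣ)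
  have ho := orderOf_eq_card_of_forall_mem_zpowers hu
  rw [Nat.card_eq_fintype_card, ZMod.card_units] at ho
  refine ⟨u, u.ne_zero, ?_⟩
  intro j h0 hj h
  have h' : u ^ j = 1 := by ext; simpa using h
  have := Nat.le_of_dvd h0 (orderOf_dvd_of_pow_eq_one h')
  omega

theorem hoff_psum (p : ℕ) [Fact p.Prime] (j : ℕ) (h0 : 0 < j) (hj : j < p - 1) :
    ∑ i ∈ Finset.range (p - 1), (((i + 1 : ℕ) : ZMod p)⁻¹) ^ j = 0 := by
  obtain ⟨r, hr, hrj⟩ := hoff_root p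
  have h1 := hoff_prod p (M := Multiplicative (ZMod p)) (fun x => Multiplicative.ofAdd (x⁻¹ ^ j))
  have h2 := hoff_scale (M := Multiplicative (ZMod p)) (fun x : ZMod p => Multiplicative.ofAdd (x⁻¹ ^ j)) r hr
  rw [← ofAdd_sum, ← ofAdd_sum] at h1 h2
  replace h1 := Multiplicative.ofAdd.injective h1
  replace h2 := Multiplicative.ofAdd.injective h2
  rw [h1]
  simp only [mul_inv, mul_pow, ← Finset.mul_sum] at h2
  have h3 : r⁻¹ ^ j ≠ 1 := by
    rw [inv_pow]; intro h; exact hrj j h0 hj (inv_eq_one.1 h)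
  have h4 : (r⁻¹ ^ j - 1) * ∑ x ∈ Finset.univ.erase (0 : ZMod p), x⁻¹ ^ j = 0 := by
    rw [sub_mul, h2]; ring
  exact (mul_eq_zero.1 h4).resolve_left (sub_ne_zero.2 h3)

theorem hoff_G (p : ℕ) [Fact p.Prime] (N : ℕ) (hN : 2 * N ≤ p - 1) :
    (X : PowerSeries (ZMod p)) ^ N ∣
      ∏ i ∈ Finset.range (p - 1), (1 + X * C (((i + 1 : ℕ) : ZMod p)⁻¹) ^ 2) - 1 := by
  obtain ⟨r, hr, hrj⟩ := hoff_root p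
  rw [hoff_prod p (fun x => (1 + X * C (x⁻¹) ^ 2 : PowerSeries (ZMod p)))]
  set P : PowerSeries (ZMod p) := ∏ x ∈ Finset.univ.erase (0 : ZMod p), (1 + X * C (x⁻¹) ^ 2) with hP
  have h2 : rescale (r⁻¹ ^ 2) P = P := by
    rw [hP, map_prod]
    have := hoff_scale (fun x => (1 + X * C (x⁻¹) ^ 2 : PowerSeries (ZMod p))) r hr
    refine Eq.trans ?_ this
    apply Finset.prod_congr rfl
    intro x _
    simp only [mul_inv, map_mul, map_add, map_one, rescale_X, map_pow]
    have : ∀ x : ZMod p, rescale (r⁻¹ ^ 2) (C x) = C x := by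
      intro x; ext n; simp only [coeff_rescale, coeff_C]; split_ifs with h <;> simp [h]
    rw [this]
    ring
  rw [X_pow_dvd_iff]
  intro b hb
  rcases Nat.eq_zero_or_pos b with rfl | hb0
  · simp [hP, map_prod]
  · have h3 := congrArg (coeff b) h2
    rw [coeff_rescale] at h3
    have h5 : (r⁻¹ ^ 2) ^ b ≠ 1 := by
      rw [← pow_mul, inv_pow]; intro h; exact hrj (2 * b) (by omega) (by omega) (inv_eq_one.1 h)
    have h4 : ((r⁻¹ ^ 2) ^ b - 1) * coeff b P = 0 := by rw [sub_mul, h3]; ring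
    rw [map_sub, (mul_eq_zero.1 h4).resolve_left (sub_ne_zero.2 h5)]
    simp [coeff_one]; omega
end

/-- The finite multiple zeta value analogue of Hoffman's identity:
`ζ_p(3,{2}^{c−1},3) + 2ζ_p(3,3,{2}^{c−1}) ≡ 0 (mod p)` (for primes `p` larger than the
weight `2c+4` plus one, so that `ζ_𝒜({2}^{c+2}) = 0` applies). -/
theorem zetaP_hoffman_finite (p c : ℕ) (hp : p.Prime) (hc : 0 < c)
    (hpc : 2 * c + 5 < p) :
    zetaP p ([3] ++ List.replicate (c - 1) 2 ++ [3])
      + 2 * zetaP p ([3, 3] ++ List.replicate (c - 1) 2) = 0 := by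
  haveI : Fact p.Prime := ⟨hp⟩
  have hodd : p % 2 = 1 := by
    rcases hp.eq_two_or_odd with h | h
    · omega
    · exact h
  rw [hoff_zeta, hoff_zeta, hoffS1, hoffS3]
  obtain ⟨N, hN⟩ : ∃ N, p = 2 * N + 1 := ⟨p / 2, by omega⟩
  set q := p - 1 with hq
  set a : ℕ → ZMod p := fun i => (((i + 1 : ℕ) : ZMod p))⁻¹ with ha
  set G : ℕ → PowerSeries (ZMod p) := fun n =>
    ∏ k ∈ Finset.range n, (1 + PowerSeries.X * PowerSeries.C (a k) ^ 2) with hGdef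
  have hG : ∀ i, G (i + 1) = G i * (1 + PowerSeries.X * PowerSeries.C (a i) ^ 2) := fun i =>
    Finset.prod_range_succ _ _
  have hGK : ∀ i, G i * (G i)⁻¹ = 1 := by
    intro i
    apply PowerSeries.mul_inv_cancel
    simp [hGdef, map_prod]
  set I : Ideal (PowerSeries (ZMod p)) := Ideal.span {PowerSeries.X ^ N} with hI
  set π := Ideal.Quotient.mk I with hπ
  have hGq : π (G q) = 1 := by
    rw [← map_one π, hπ, Ideal.Quotient.eq, hI, Ideal.mem_span_singleton]
    exact hoff_G p N (by omega)
  have hai : ∀ i < q, ((i : ZMod p) + 1) * a i = 1 := by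
    intro i hi
    have : ((i + 1 : ℕ) : ZMod p) ≠ 0 := by
      rw [Ne, ZMod.natCast_eq_zero_iff]
      intro h
      have := Nat.le_of_dvd (by omega) h
      omega
    have h := mul_inv_cancel₀ this
    rw [ha]
    push_cast at h ⊢
    exact h
  have hq0 : (q : ZMod p) + 1 = 0 := by
    have : ((q + 1 : ℕ) : ZMod p) = 0 := by
      rw [show q + 1 = p by omega]; exact ZMod.natCast_self p
    exact_mod_cast this
  have har : ∀ i < q, a (q - 1 - i) = - a i := by
    intro i hi
    have h3 : ((q - 1 - i + 1 : ℕ) : ZMod p) = -((i + 1 : ℕ) : ZMod p) := by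
      have : ((q - 1 - i + 1 : ℕ) : ZMod p) + ((i + 1 : ℕ) : ZMod p) = (q : ZMod p) + 1 := by
        exact_mod_cast congrArg (Nat.cast (R := ZMod p)) (show q - 1 - i + 1 + (i + 1) = q + 1 by omega)
      linear_combination this + hq0
    simp only [ha]
    rw [h3, inv_neg]
  have hps : ∀ j, 0 < j → j < q → ∑ i ∈ Finset.range q, a i ^ j = 0 := fun j h0 hj =>
    hoff_psum p j h0 hj
  -- splitting
  have hCr : ∀ i ≤ q, ∑ k ∈ Finset.range (q - i), a k ^ 3 = ∑ k ∈ Finset.range i, a k ^ 3 := by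
    intro i hi
    have h1 := hps 3 (by omega) (by omega)
    rw [show q = (q - i) + i by omega, Finset.sum_range_add] at h1
    have h2 : ∑ x ∈ Finset.range i, a (q - i + x) ^ 3 = - ∑ k ∈ Finset.range i, a k ^ 3 := by
      rw [← Finset.sum_range_reflect, ← Finset.sum_neg_distrib]
      apply Finset.sum_congr rfl
      intro k hk
      have hk := Finset.mem_range.1 hk
      rw [show q - i + (i - 1 - k) = q - 1 - k by omega, har k (by omega)]
      ring
    rw [h2] at h1
    linear_combination h1
  have hGr : ∀ i ≤ q, G (q - i) * G i = G q := by
    intro i hi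
    conv_rhs => rw [show q = (q - i) + i by omega]
    simp only [hGdef]
    rw [Finset.prod_range_add]
    congr 1
    rw [← Finset.prod_range_reflect]
    apply Finset.prod_congr rfl
    intro k hk
    have hk := Finset.mem_range.1 hk
    have : a (i - 1 - k) = - a (q - i + k) := by
      rw [← har _ (by omega)]
      congr 1
      omega
    rw [this, map_neg, neg_sq]
  have hKuniq : ∀ i x, π (G i) * x = 1 → x = π (G i)⁻¹ := by
    intro i x hx
    have h1 : π (G i) * π (G i)⁻¹ = 1 := by rw [← map_mul, hGK, map_one]
    calc x = x * (π (G i) * π (G i)⁻¹) := by rw [h1, mul_one]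
      _ = (π (G i) * x) * π (G i)⁻¹ := by ring
      _ = _ := by rw [hx, one_mul]
  have hpsC : ∀ j, 0 < j → j < q →
      ∑ i ∈ Finset.range q, π (PowerSeries.C (a i)) ^ j = 0 := by
    intro j h0 hj
    have := congrArg (fun x => π (PowerSeries.C x)) (hps j h0 hj)
    simpa using this
  have key := hoff_core q (π PowerSeries.X) (fun i => π (PowerSeries.C (a i))) (fun i => π (G i))
    (fun i => π (G i)⁻¹) (fun i => ∑ k ∈ Finset.range i, π (PowerSeries.C (a k)) ^ 3)
    (by
      intro i hi
      have := congrArg (fun x => π (PowerSeries.C x)) (hai i hi)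
      simpa using this)
    (by
      have := congrArg (fun x => π (PowerSeries.C x)) hq0
      simpa using this)
    (by simp [hGdef])
    (by intro i; simp only [hG, map_mul, map_add, map_one, map_pow])
    (by intro i; rw [← map_mul, hGK, map_one])
    hGq (by simp)
    (by intro i; exact Finset.sum_range_succ _ _)
    (hpsC 3 (by omega) (by omega)) (hpsC 2 (by omega) (by omega)) (hpsC 4 (by omega) (by omega))
    (hpsC 6 (by omega) (by omega))
    (by
      intro i hi
      apply hKuniq
      rw [mul_comm, ← map_mul, hGr i hi, hGq])
    (by
      intro i hi
      have := congrArg (fun x => π (PowerSeries.C x)) (hCr i hi)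
      simpa using this)
  have hA : ∀ i ≤ q, π (hoffA q a [] i) = π (G i)⁻¹ := by
    intro i hi
    apply hKuniq
    rw [← map_mul, hoffA_nil q a G hG i hi, hGq]
  have hB : ∀ i ≤ q, π (hoffA q a [3] i)
      = π (G i)⁻¹ * ∑ n ∈ Finset.Ico i q, π (PowerSeries.C (a n)) ^ 3 * π (G n) := by
    intro i hi
    have h := congrArg π (hoffA_three q a G hG i hi)
    simp only [map_mul, map_sum, map_pow] at h
    rw [← h]
    have h1 : π (G i) * π (G i)⁻¹ = 1 := by rw [← map_mul, hGK, map_one]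
    linear_combination (-π (hoffA q a [3] i)) * h1
  set S1 := ∑ i ∈ Finset.Ico 0 q, PowerSeries.C (a i) ^ 3 * hoffA q a [3] (i + 1) with hS1
  set S3 := ∑ i ∈ Finset.Ico 0 q, ∑ j ∈ Finset.Ico (i + 1) q,
          PowerSeries.C (a i) ^ 3 * (PowerSeries.C (a j) ^ 3 * hoffA q a [] (j + 1)) with hS3
  have e1 : π S1 = ∑ j ∈ Finset.range q, ∑ i ∈ Finset.range j,
      π (PowerSeries.C (a i)) ^ 3 * π (PowerSeries.C (a j)) ^ 3 * π (G j) * π (G (i + 1))⁻¹ := by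
    have : π S1 = ∑ i ∈ Finset.Ico 0 q, ∑ j ∈ Finset.Ico (i + 1) q,
      π (PowerSeries.C (a i)) ^ 3 * π (PowerSeries.C (a j)) ^ 3 * π (G j) * π (G (i + 1))⁻¹ := by
      simp only [hS1, map_sum, map_mul, map_pow]
      apply Finset.sum_congr rfl
      intro i hi
      have hi := Finset.mem_Ico.1 hi
      rw [hB _ (by omega), Finset.mul_sum, Finset.mul_sum]
      apply Finset.sum_congr rfl
      intro j _
      ring
    rw [this, Finset.sum_Ico_Ico_comm']
    simp only [Finset.range_eq_Ico]
  have e3 : π S3 = ∑ j ∈ Finset.range q,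
      π (PowerSeries.C (a j)) ^ 3 * π (G (j + 1))⁻¹
        * ∑ k ∈ Finset.range j, π (PowerSeries.C (a k)) ^ 3 := by
    rw [hS3, Finset.sum_Ico_Ico_comm']
    simp only [map_sum, map_mul, map_pow, Finset.range_eq_Ico]
    apply Finset.sum_congr rfl
    intro j hj
    have hj := Finset.mem_Ico.1 hj
    rw [hA _ (by omega), Finset.mul_sum]
    apply Finset.sum_congr rfl
    intro i _
    ring
  rw [← e1, ← e3] at key
  have key2 : π (PowerSeries.X ^ 3 * (S1 + 2 * S3)) = 0 := by
    rw [← key, two_mul, two_mul, map_mul, map_pow, map_add, map_add]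
  rw [hπ, Ideal.Quotient.eq_zero_iff_mem, hI, Ideal.mem_span_singleton,
    PowerSeries.X_pow_dvd_iff] at key2
  have key3 := key2 (c - 1 + 3) (by omega)
  rw [PowerSeries.coeff_X_pow_mul] at key3
  rw [map_add, two_mul, map_add] at key3
  rw [two_mul]
  exact key3
end

section
/- For every positive integer N and positive integer c, the finite-sum identity holds: Σ_{0<n_1<···<n_{c+2}<N} 1/(n_1^3 n_2^2···n_c^2 n_{c+1} n_{c+2}^2) + Σ_{0<n_1<···<n_c<n_{c+1}≤n_{c+2}<N} 1/(n_1^3 n_2^2···n_c^2 (N−n_{c+1}) n_{c+2}^2) = Σ_{0<n_1<···<n_{c+2}<N} 1/(n_1^2···n_{c+2}^2) + 2 Σ_{0<n_1<···<n_{c+1}<N} 1/(n_1^3 n_2^3 n_3^2···n_{c+1}^2). -/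
/-- The truncated multiple zeta sum `∑_{0<n₁<⋯<n_r<N} 1/(n₁^{k₁}⋯n_r^{k_r})` over `ℚ`. -/
def truncMZV (N : ℕ) (ks : List ℕ) : ℚ :=
  ∑ n : Fin ks.length → Fin N,
    if (∀ i j : Fin ks.length, i < j → (n i : ℕ) < (n j : ℕ)) ∧ (∀ i, 0 < (n i : ℕ)) then
      ∏ i, (1 : ℚ) / ((n i : ℕ) : ℚ) ^ ks.get i
    else 0

/-- The second sum on the left-hand side:
`∑_{0<n₁<⋯<n_c<n_{c+1}≤n_{c+2}<N} 1/(n₁³ n₂²⋯n_c² (N−n_{c+1}) n_{c+2}²)`. -/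
def truncFlat (N c : ℕ) : ℚ :=
  ∑ n : Fin (c + 2) → Fin N,
    if (∀ i j : Fin (c + 2), (i : ℕ) < (j : ℕ) → (j : ℕ) ≤ c → (n i : ℕ) < (n j : ℕ))
        ∧ (∀ i j : Fin (c + 2), (i : ℕ) < (j : ℕ) → (n i : ℕ) ≤ (n j : ℕ))
        ∧ (∀ i, 0 < (n i : ℕ)) then
      ∏ i : Fin (c + 2),
        if (i : ℕ) = 0 then (1 : ℚ) / ((n i : ℕ) : ℚ) ^ 3
        else if (i : ℕ) = c then (1 : ℚ) / ((N : ℚ) - ((n i : ℕ) : ℚ))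
        else (1 : ℚ) / ((n i : ℕ) : ℚ) ^ 2
    else 0

/-- summation operator -/
def opS : (ℕ → ℚ) →ₗ[ℚ] (ℕ → ℚ) where
  toFun f N := ∑ k ∈ Finset.Ico 1 N, f k
  map_add' f g := by ext N; simp [Finset.sum_add_distrib]
  map_smul' a f := by ext N; simp [Finset.mul_sum]

/-- division operator -/
def opJ : (ℕ → ℚ) →ₗ[ℚ] (ℕ → ℚ) where
  toFun f N := f N / N
  map_add' f g := by ext N; simp [add_div]
  map_smul' a f := by ext N; simp [mul_div_assoc]

/-- multiplication by the truncated zeta value at 2 -/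
def opM : (ℕ → ℚ) →ₗ[ℚ] (ℕ → ℚ) where
  toFun f N := (∑ k ∈ Finset.Ico 1 N, 1 / (k : ℚ) ^ 2) * f N
  map_add' f g := by ext N; simp [mul_add]
  map_smul' a f := by ext N; simp; ring

/-- convolution with 1/n -/
def opC : (ℕ → ℚ) →ₗ[ℚ] (ℕ → ℚ) where
  toFun f N := ∑ k ∈ Finset.Ico 1 N, f k / ((N : ℚ) - k)
  map_add' f g := by ext N; simp [Finset.sum_add_distrib, add_div]
  map_smul' a f := by ext N; simp [Finset.mul_sum, mul_div_assoc]

theorem MJ (f : ℕ → ℚ) : opM (opJ f) = opJ (opM f) := by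
  ext N; simp [opM, opJ, mul_div_assoc]

theorem CJ (f : ℕ → ℚ) : opC (opJ f) = opJ (opC f) + opJ (opS (opJ f)) := by
  ext N
  simp only [opC, opJ, opS, LinearMap.coe_mk, AddHom.coe_mk, Pi.add_apply]
  rw [← add_div, ← Finset.sum_add_distrib, Finset.sum_div]
  refine Finset.sum_congr rfl fun k hk => ?_
  rw [Finset.mem_Ico] at hk
  have h1 : (k : ℚ) ≠ 0 := by norm_cast; omega
  have h2 : (N : ℚ) ≠ 0 := by norm_cast; omega
  have h3 : (N : ℚ) - k ≠ 0 := by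
    rw [sub_ne_zero]; norm_cast; omega
  field_simp
  ring

theorem CS (f : ℕ → ℚ) : opC (opS f) = opS (opC f) := by
  ext N
  simp only [opC, opS, LinearMap.coe_mk, AddHom.coe_mk]
  simp_rw [Finset.sum_div]
  rw [Finset.sum_sigma', Finset.sum_sigma']
  refine Finset.sum_bij' (fun x _ => ⟨N - x.1 + x.2, x.2⟩) (fun x _ => ⟨N - x.1 + x.2, x.2⟩)
    ?_ ?_ ?_ ?_ ?_
  · rintro ⟨a, b⟩ h; simp at h ⊢; omega
  · rintro ⟨a, b⟩ h; simp at h ⊢; omega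
  · rintro ⟨a, b⟩ h; simp at h ⊢; omega
  · rintro ⟨a, b⟩ h; simp at h ⊢; omega
  · rintro ⟨a, b⟩ h
    simp at h ⊢
    rw [Nat.cast_sub (by omega)]

theorem MS (f : ℕ → ℚ) :
    opM (opS f) = opS (opM f) + opS (opJ (opJ (opS f))) + opS (opJ (opJ f)) := by
  ext N
  simp only [opM, opJ, opS, LinearMap.coe_mk, AddHom.coe_mk, Pi.add_apply]
  induction N with
  | zero => simp
  | succ n ih =>
    rcases Nat.eq_zero_or_pos n with rfl | hn
    · simp
    · simp only [Finset.sum_Ico_succ_top (show 1 ≤ n from hn)]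
      have h1 : (n : ℚ) ≠ 0 := by norm_cast; omega
      have : ∀ a b c d : ℚ, (a + c) * (b + d) = a * b + a * d + c * b + c * d := by
        intros; ring
      rw [this, ih]
      field_simp
      ring

theorem C1 : opC 1 = opS (opJ 1) := by
  ext N
  simp only [opC, opJ, opS, LinearMap.coe_mk, AddHom.coe_mk, Pi.one_apply]
  refine Finset.sum_bij' (fun x _ => N - x) (fun x _ => N - x) ?_ ?_ ?_ ?_ ?_
  · intro a h; simp at h ⊢; omega
  · intro a h; simp at h ⊢; omega
  · intro a h; simp at h ⊢; omega
  · intro a h; simp at h ⊢; omega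
  · intro a h; simp at h ⊢
    rw [Nat.cast_sub (by omega)]

theorem M1 : opM 1 = opS (opJ (opJ 1)) := by
  ext N
  simp only [opM, opJ, opS, LinearMap.coe_mk, AddHom.coe_mk, Pi.one_apply, mul_one]
  refine Finset.sum_congr rfl fun k _ => ?_
  rw [div_div, sq]

/-- the operator commuting with I_2 -/
def opE (f : ℕ → ℚ) : ℕ → ℚ := opM (opC f) - opC (opM f) + opS (opJ (opJ (opS (opJ f))))

theorem E2 (f : ℕ → ℚ) : opE (opS (opJ (opJ f))) = opS (opJ (opJ (opE f))) := by
  simp only [opE, MJ, CJ, CS, MS, map_add, map_sub]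
  abel

theorem E3 : opE (opS (opJ (opJ (opJ 1)))) =
    opS (opJ (opJ (opS (opJ (opJ (opS (opJ (opJ 1)))))))) +
    (2 : ℚ) • opS (opJ (opJ (opJ (opS (opJ (opJ (opJ 1))))))) := by
  simp only [opE, MJ, CJ, CS, MS, map_add, map_sub, C1, M1]
  module

/-- I_a -/
def opI (a : ℕ) (f : ℕ → ℚ) : ℕ → ℚ := fun N => ∑ k ∈ Finset.Ico 1 N, 1 / (k : ℚ) ^ a * f k

theorem I2 (f : ℕ → ℚ) : opI 2 f = opS (opJ (opJ f)) := by
  ext N; simp only [opI, opJ, opS, LinearMap.coe_mk, AddHom.coe_mk]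
  refine Finset.sum_congr rfl fun k _ => ?_
  ring

theorem I3 (f : ℕ → ℚ) : opI 3 f = opS (opJ (opJ (opJ f))) := by
  ext N; simp only [opI, opJ, opS, LinearMap.coe_mk, AddHom.coe_mk]
  refine Finset.sum_congr rfl fun k _ => ?_
  ring

theorem I1 (f : ℕ → ℚ) : opI 1 f = opS (opJ f) := by
  ext N; simp only [opI, opJ, opS, LinearMap.coe_mk, AddHom.coe_mk]
  refine Finset.sum_congr rfl fun k _ => ?_
  ring

theorem Emain (d : ℕ) : opE ((opI 2)^[d] (opI 3 1)) =
    (opI 2)^[d + 3] 1 + (2 : ℚ) • (opI 2)^[d] (opI 3 (opI 3 1)) := by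
  induction d with
  | zero =>
    simp only [Function.iterate_succ_apply, Function.iterate_zero, id]
    rw [I3, E3]; simp only [I2, I3]
  | succ d ih =>
    rw [Function.iterate_succ_apply', I2, E2, ih, Function.iterate_succ_apply' _ d,
      show d + 1 + 3 = (d + 3) + 1 by ring, Function.iterate_succ_apply' _ (d+3), I2, I2]
    simp only [map_add, map_smul]

/-- general nested sum -/
def nest : (r : ℕ) → (ℕ → ℕ → ℚ) → ℕ → ℚ
  | 0, _, _ => 1
  | r + 1, w, N => ∑ m ∈ Finset.Ico 1 N, w r m * nest r w m

/-- nested sum as a sum over tuples -/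
def tup (r : ℕ) (w : ℕ → ℕ → ℚ) (N : ℕ) : ℚ :=
  ∑ n ∈ Fintype.piFinset (fun _ : Fin r => Finset.Ico 1 N),
    if StrictMono n then ∏ i : Fin _, w (i : ℕ) (n i) else 0

theorem tup_step (r e : ℕ) (he : e ≤ 1) (w : ℕ → ℕ → ℚ) (N : ℕ) :
    (∑ n ∈ Fintype.piFinset (fun _ : Fin (r + 1) => Finset.Ico 1 N),
      if StrictMono (fun i : Fin r => n i.castSucc) ∧ ∀ i : Fin r, n i.castSucc < n (Fin.last r) + e
      then ∏ i : Fin _, w (i : ℕ) (n i) else 0) = ∑ m ∈ Finset.Ico 1 N, w r m * tup r w (m + e) := by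
  unfold tup
  simp_rw [Finset.mul_sum, mul_ite, mul_zero, ← Finset.sum_filter]
  rw [Finset.sum_sigma']
  refine Finset.sum_bij' (fun n _ => ⟨n (Fin.last r), fun i => n i.castSucc⟩)
    (fun x _ => Fin.snoc (α := fun _ => ℕ) x.2 x.1) ?_ ?_ ?_ ?_ ?_
  · intro n h
    simp only [Finset.mem_filter, Fintype.mem_piFinset, Finset.mem_Ico, Finset.mem_sigma] at h ⊢
    exact ⟨h.1 _, fun i => ⟨(h.1 _).1, h.2.2 i⟩, h.2.1⟩
  · rintro ⟨m, n⟩ h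
    simp only [Finset.mem_filter, Fintype.mem_piFinset, Finset.mem_Ico, Finset.mem_sigma] at h ⊢
    refine ⟨fun i => ?_, ?_, ?_⟩
    · refine Fin.lastCases ?_ (fun i => ?_) i
      · simpa using h.1
      · have := h.2.1 i
        simp only [Fin.snoc_castSucc]; omega
    · simpa using h.2.2
    · intro i
      simpa using (h.2.1 i).2
  · intro n h
    ext i
    refine Fin.lastCases ?_ (fun i => ?_) i <;> simp
  · rintro ⟨m, n⟩ h
    simp
  · intro n h
    simp [Fin.prod_univ_castSucc, mul_comm]

theorem strictMono_iff_last (r : ℕ) (n : Fin (r + 1) → ℕ) : StrictMono n ↔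
    StrictMono (fun i : Fin r => n i.castSucc) ∧ ∀ i : Fin r, n i.castSucc < n (Fin.last r) + 0 := by
  constructor
  · intro h
    exact ⟨fun i j hij => h (by simpa using hij), fun i => h (Fin.castSucc_lt_last i)⟩
  · rintro ⟨h1, h2⟩ i j
    refine Fin.lastCases ?_ (fun j => ?_) j
    · refine Fin.lastCases ?_ (fun i => ?_) i
      · simp
      · intro _; simpa using h2 i
    · refine Fin.lastCases ?_ (fun i => ?_) i
      · intro h; exact absurd h (not_lt.mpr (Fin.le_last _))
      · intro h; exact h1 (by simpa using h)

theorem tup_eq_nest (r : ℕ) (w : ℕ → ℕ → ℚ) (N : ℕ) : tup r w N = nest r w N := by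
  induction r generalizing N with
  | zero => simp [tup, nest, Subsingleton.strictMono]
  | succ r ih =>
    have := tup_step r 0 (by omega) w N
    simp_rw [← strictMono_iff_last] at this
    rw [tup, this, nest]
    simp [ih]

theorem sum_fin_eq (r N : ℕ) (F : (Fin r → ℕ) → ℚ) :
    (∑ n : Fin r → Fin N, if (∀ i, 0 < (n i : ℕ)) then F (fun i => n i) else 0) =
    ∑ n ∈ Fintype.piFinset (fun _ : Fin r => Finset.Ico 1 N), F n := by
  rw [← Finset.sum_filter]
  refine Finset.sum_bij (fun n _ => fun i => (n i : ℕ)) ?_ ?_ ?_ ?_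
  · intro n h
    simp only [Finset.mem_filter, Fintype.mem_piFinset, Finset.mem_Ico] at h ⊢
    exact fun i => ⟨h.2 i, (n i).2⟩
  · intro n _ m _ h
    ext i
    exact congrFun h i
  · intro n h
    simp only [Fintype.mem_piFinset, Finset.mem_Ico] at h
    exact ⟨fun i => ⟨n i, (h i).2⟩, by simpa using fun i => Nat.lt_of_succ_le (h i).1, rfl⟩
  · intros; rfl

theorem nest_congr (r : ℕ) (w w' : ℕ → ℕ → ℚ) (h : ∀ i < r, w i = w' i) (N : ℕ) :
    nest r w N = nest r w' N := by
  induction r generalizing N with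
  | zero => rfl
  | succ r ih =>
    simp only [nest]
    rw [h r (by omega)]
    refine Finset.sum_congr rfl fun m _ => ?_
    rw [ih (fun i hi => h i (by omega))]

theorem nest_list (ks : List ℕ) : nest ks.length (fun i k => 1 / (k : ℚ) ^ ks.getD i 0)
    = ks.foldl (fun f a => opI a f) 1 := by
  induction ks using List.reverseRecOn with
  | nil => rfl
  | append_singleton ks a ih =>
    ext N
    rw [List.foldl_append, List.length_append, ← ih]
    simp only [List.length_singleton, nest, List.foldl_cons, List.foldl_nil, opI]
    refine Finset.sum_congr rfl fun m _ => ?_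
    congr 1
    · simp
    · apply nest_congr
      intro i hi
      ext k
      rw [List.getD_append _ _ _ _ hi]

theorem truncMZV_eq (N : ℕ) (ks : List ℕ) :
    truncMZV N ks = ks.foldl (fun f a => opI a f) 1 N := by
  rw [← nest_list, ← tup_eq_nest, tup, ← sum_fin_eq, truncMZV]
  refine Finset.sum_congr rfl fun n _ => ?_
  rw [← ite_and]
  refine ite_congr ?_ (fun _ => ?_) (fun _ => rfl)
  · rw [and_comm]; rfl
  · simp

theorem foldl_rep (d : ℕ) (f : ℕ → ℚ) :
    (List.replicate d 2).foldl (fun f a => opI a f) f = (opI 2)^[d] f := by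
  induction d generalizing f with
  | zero => rfl
  | succ d ih => simp [List.replicate_succ, ih]

theorem truncFlat_eq (N c : ℕ) (hc : 0 < c) :
    truncFlat N c = ∑ l ∈ Finset.Ico 1 N, 1 / (l : ℚ) ^ 2 *
      ∑ k ∈ Finset.Ico 1 (l + 1), 1 / ((N : ℚ) - k) * (opI 2)^[c - 1] (opI 3 1) k := by
  set w : ℕ → ℕ → ℚ := fun i k => if i = 0 then (1 : ℚ) / (k : ℚ) ^ 3
        else if i = c then (1 : ℚ) / ((N : ℚ) - (k : ℚ))
        else (1 : ℚ) / (k : ℚ) ^ 2 with hw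
  have h1 : truncFlat N c = ∑ l ∈ Finset.Ico 1 N, w (c + 1) l * tup (c + 1) w (l + 1) := by
    rw [← tup_step _ _ le_rfl, ← sum_fin_eq, truncFlat]
    refine Finset.sum_congr rfl fun n _ => ?_
    rw [← ite_and]
    refine if_congr ?_ rfl rfl
    rw [← and_assoc, and_comm]
    refine and_congr_right fun _ => ?_
    constructor
    · rintro ⟨a, b⟩
      refine ⟨fun i j hij => a _ _ (by simpa using hij) (by simp; omega), fun i => ?_⟩
      exact Nat.lt_succ_of_le (b i.castSucc (Fin.last _) (by simp; omega))
    · rintro ⟨a, b⟩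
      have a' : ∀ i j : Fin (c + 2), (i : ℕ) < (j : ℕ) → (j : ℕ) ≤ c → (n i : ℕ) < (n j : ℕ) := by
        intro i j hij hj
        exact @a ⟨i, by omega⟩ ⟨j, by omega⟩ hij
      refine ⟨a', fun i j hij => ?_⟩
      by_cases hj : (j : ℕ) ≤ c
      · exact (a' i j hij hj).le
      · have : j = Fin.last _ := by ext; simp; omega
        subst this
        have := b ⟨i, by simpa using hij⟩
        exact Nat.lt_succ_iff.mp this
  rw [h1]
  refine Finset.sum_congr rfl fun l _ => ?_
  rw [tup_eq_nest, nest]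
  congr 1
  · simp [hw]
  · refine Finset.sum_congr rfl fun k _ => ?_
    congr 1
    · simp [hw, hc.ne']
    · have := nest_list (3 :: List.replicate (c - 1) 2)
      rw [List.foldl_cons, foldl_rep] at this
      rw [← this, List.length_cons, List.length_replicate, Nat.sub_add_cancel hc]
      apply nest_congr
      intro i hi
      ext m
      rcases i with _ | i
      · simp [hw]
      · have : i < c - 1 := by omega
        simp [hw, hi.ne, List.getD_replicate, this]

theorem D_eq (f : ℕ → ℚ) (N : ℕ) : (∑ l ∈ Finset.Ico 1 N, 1 / (l : ℚ) ^ 2 *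
      ∑ k ∈ Finset.Ico 1 (l + 1), 1 / ((N : ℚ) - k) * f k) = opM (opC f) N - opC (opM f) N := by
  simp only [opM, opC, LinearMap.coe_mk, AddHom.coe_mk]
  rw [Finset.mul_sum, ← Finset.sum_sub_distrib]
  simp_rw [Finset.mul_sum]
  rw [Finset.sum_comm' (t' := Finset.Ico 1 N) (s' := fun k => Finset.Ico k N)
    (by intro x y; simp; omega)]
  refine Finset.sum_congr rfl fun k hk => ?_
  rw [Finset.mem_Ico] at hk
  rw [← Finset.sum_mul, ← Finset.sum_Ico_consecutive _ hk.1 hk.2.le]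
  ring

/-- The level-`N` (multiple zeta diamond value) form of Hoffman's identity:
for all positive `N` and `c`,
`∑_{0<n₁<⋯<n_{c+2}<N} 1/(n₁³ n₂²⋯n_c² n_{c+1} n_{c+2}²)`
`+ ∑_{0<n₁<⋯<n_c<n_{c+1}≤n_{c+2}<N} 1/(n₁³ n₂²⋯n_c² (N−n_{c+1}) n_{c+2}²)`
`= ∑_{0<n₁<⋯<n_{c+2}<N} 1/(n₁²⋯n_{c+2}²) + 2 ∑_{0<n₁<⋯<n_{c+1}<N} 1/(n₁³ n₂³ n₃²⋯n_{c+1}²)`. -/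
theorem diamond_hoffman_levelN (N c : ℕ) (hN : 0 < N) (hc : 0 < c) :
    truncMZV N ([3] ++ List.replicate (c - 1) 2 ++ [1, 2]) + truncFlat N c
      = truncMZV N (List.replicate (c + 2) 2)
        + 2 * truncMZV N ([3, 3] ++ List.replicate (c - 1) 2) := by
  obtain ⟨d, rfl⟩ : ∃ d, c = d + 1 := ⟨c - 1, by omega⟩
  rw [truncFlat_eq _ _ hc, D_eq, truncMZV_eq, truncMZV_eq, truncMZV_eq]
  simp only [List.foldl_append, List.foldl_cons, List.foldl_nil, foldl_rep, Nat.add_sub_cancel]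
  have := congrFun (Emain d) N
  simp only [opE, Pi.add_apply, Pi.sub_apply, Pi.smul_apply, smul_eq_mul] at this
  rw [I1, I2 (opS _), show d + 1 + 2 = d + 3 by ring, ← this]
  ring
end
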